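/- Let k be an algebraically closed field of characteristic 0, and let Y and Z be closed subvarieties of affine d-space over k that intersect in finitely many points, including the origin, and such that dim(Y) + dim(Z) = d. If f is a nonzero regular function on affine d-space that vanishes to order m along Y and to order n along Z, then f vanishes to order at least m+n at the origin. -/

import Mathlib

/-- The set of common zeros in affine `d`-space `k^d` of an ideal of polynomials:
the closed subvariety `V(p)`. -/
def affineZeros {k : Type*} [CommSemiring k] {d : ℕ}
    (p : Ideal (MvPolynomial (Fin d) k)) : Set (Fin d → k) :=
  {a | ∀ f ∈ p, MvPolynomial.eval a f = 0}

/-- The iterated partial derivative of a polynomial along a list of coordinate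
directions; its order is the length of the list. -/
noncomputable def iteratedPDeriv {k : Type*} [CommSemiring k] {d : ℕ}
    (v : List (Fin d)) (f : MvPolynomial (Fin d) k) : MvPolynomial (Fin d) k :=
  v.foldl (fun g i => MvPolynomial.pderiv i g) f

/-- A polynomial `f` vanishes to order `m` along a set `Y ⊆ k^d` if every partial
derivative of `f` of order `< m` vanishes identically on `Y` while some partial
derivative of order `m` does not vanish identically on `Y`. -/
def VanishesToOrderAlong {k : Type*} [CommSemiring k] {d : ℕ}
    (f : MvPolynomial (Fin d) k) (Y : Set (Fin d → k)) (m : ℕ) : Prop :=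
  (∀ v : List (Fin d), v.length < m → ∀ a ∈ Y,
      MvPolynomial.eval a (iteratedPDeriv v f) = 0) ∧
  (∃ v : List (Fin d), v.length = m ∧ ∃ a ∈ Y,
      MvPolynomial.eval a (iteratedPDeriv v f) ≠ 0)

namespace Aux

open MvPolynomial

/-- The restriction of a polynomial to the line `z + X w`. -/
noncomputable def lineRes {k R : Type*} [Field k] [CommRing R] [Algebra k R] {d : ℕ}
    (z w : Fin d → R) : MvPolynomial (Fin d) k →ₐ[k] Polynomial R :=
  aeval (fun i => Polynomial.C (z i) + Polynomial.X * Polynomial.C (w i))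

lemma lineRes_coeff_zero {k R : Type*} [Field k] [CommRing R] [Algebra k R] {d : ℕ}
    (z w : Fin d → R) (f : MvPolynomial (Fin d) k) :
    (lineRes z w f).coeff 0 = aeval z f := by
  rw [Polynomial.coeff_zero_eq_eval_zero]
  induction f using MvPolynomial.induction_on with
  | C a => simp [lineRes, Polynomial.algebraMap_apply]
  | add p q hp hq => simp [hp, hq]
  | mul_X p i hp => rw [map_mul, Polynomial.eval_mul, hp]; simp [lineRes]

lemma lineRes_derivative {k R : Type*} [Field k] [CommRing R] [Algebra k R] {d : ℕ}
    (z w : Fin d → R) (f : MvPolynomial (Fin d) k) :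
    Polynomial.derivative (lineRes z w f) =
      ∑ i, Polynomial.C (w i) * lineRes z w (pderiv i f) := by
  induction f using MvPolynomial.induction_on with
  | C a => simp [lineRes, Polynomial.algebraMap_apply]
  | add p q hp hq => simp [hp, hq, mul_add, Finset.sum_add_distrib]
  | mul_X p j hp =>
    rw [map_mul, Polynomial.derivative_mul, hp]
    have h1 : lineRes (k := k) z w (X j) = Polynomial.C (z j) + Polynomial.X * Polynomial.C (w j) := by
      simp [lineRes]
    have h2 : ∀ i, lineRes z w (pderiv i (p * X j)) =
        lineRes z w (pderiv i p) * lineRes z w (X j : MvPolynomial (Fin d) k) + lineRes z w p * (if i = j then 1 else 0) := by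
      intro i
      rw [Derivation.leibniz, smul_eq_mul, smul_eq_mul, pderiv_X, map_add, map_mul, map_mul]
      by_cases h : i = j
      · subst h; simp; ring
      · simp [h, Ne.symm h]; ring
    simp_rw [h2, mul_add, Finset.sum_add_distrib, Finset.sum_mul]
    congr 1
    · exact Finset.sum_congr rfl fun i _ => by ring
    · rw [h1]; simp; ring

lemma X_pow_dvd_lineRes {k R : Type*} [Field k] [CharZero k] [CommRing R] [Algebra k R] {d : ℕ}
    (z w : Fin d → R) (n : ℕ) : ∀ (f : MvPolynomial (Fin d) k),
    (∀ v : List (Fin d), v.length < n → aeval z (iteratedPDeriv v f) = 0) →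
    Polynomial.X ^ n ∣ lineRes z w f := by
  induction n with
  | zero => simp
  | succ n ih =>
    intro f hf
    have h1 : ∀ i, Polynomial.X ^ n ∣ lineRes z w (pderiv i f) := fun i =>
      ih _ fun v hv => hf (i :: v) (by simpa using hv)
    have h2 : Polynomial.X ^ n ∣ Polynomial.derivative (lineRes z w f) := by
      rw [lineRes_derivative]
      exact Finset.dvd_sum fun i _ => (h1 i).mul_left _
    rw [Polynomial.X_pow_dvd_iff] at h2 ⊢
    intro j hj
    cases j with
    | zero => rw [lineRes_coeff_zero]; exact hf [] (by simp)
    | succ j =>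
      have h3 := h2 j (by omega)
      rw [Polynomial.coeff_derivative] at h3
      have hu : IsUnit ((j : R) + 1) := by
        have : ((j : R) + 1) = algebraMap k R ((j : k) + 1) := by simp
        rw [this]
        exact (isUnit_iff_ne_zero.mpr (by exact_mod_cast Nat.succ_ne_zero j)).map _
      exact (hu.mul_left_eq_zero).mp h3

lemma sub_one_pow_dvd_lineRes {k R : Type*} [Field k] [CharZero k] [CommRing R] [Algebra k R]
    {d : ℕ} (y z : Fin d → R) (m : ℕ) (f : MvPolynomial (Fin d) k)
    (hf : ∀ v : List (Fin d), v.length < m → aeval y (iteratedPDeriv v f) = 0) :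
    (Polynomial.X - 1) ^ m ∣ lineRes z (fun i => y i - z i) f := by
  obtain ⟨h, hh⟩ := X_pow_dvd_lineRes y (fun i => y i - z i) m f hf
  have key : lineRes (k := k) z (fun i => y i - z i) =
      ((Polynomial.aeval (Polynomial.X - 1 : Polynomial R)).restrictScalars k).comp
        (lineRes y (fun i => y i - z i)) := by
    apply MvPolynomial.algHom_ext
    intro i
    simp only [lineRes, aeval_X, AlgHom.comp_apply, AlgHom.restrictScalars_apply, map_add,
      map_mul, Polynomial.aeval_X, Polynomial.aeval_C, Polynomial.algebraMap_apply,
      Algebra.algebraMap_self, RingHom.id_apply, map_sub]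
    ring
  rw [key, AlgHom.comp_apply, hh]
  simp

lemma mem_all_coeff {R : Type*} [CommRing R] (I : Ideal R) (G P : Polynomial R) (N : ℕ)
    (hP : P.Monic) (hN : P.natDegree = N) (hd : P ∣ G) (hG : ∀ j, G.coeff j ∈ I ^ j) (j : ℕ) :
    G.coeff j ∈ I ^ N := by
  set φ := Ideal.Quotient.mk (I ^ N)
  rw [← Ideal.Quotient.eq_zero_iff_mem, ← Polynomial.coeff_map]
  suffices h : G.map φ = 0 by rw [h]; simp
  by_contra hne
  have hnt : Nontrivial (R ⧸ I ^ N) := by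
    by_contra hn
    rw [not_nontrivial_iff_subsingleton] at hn
    exact hne (Subsingleton.elim _ _)
  refine (hP.map φ).not_dvd_of_natDegree_lt hne ?_ (Polynomial.map_dvd φ hd)
  rw [hP.natDegree_map, hN]
  by_contra hlt
  push Not at hlt
  apply hne
  rw [← Polynomial.leadingCoeff_eq_zero, Polynomial.leadingCoeff, Polynomial.coeff_map,
    Ideal.Quotient.eq_zero_iff_mem]
  exact Ideal.pow_le_pow_right hlt (hG _)

lemma prod_coeff {R ι : Type*} [CommRing R] (I M : Ideal R) (z w : ι → R)
    (hz : ∀ i, z i ∈ M) (hw : ∀ i, w i ∈ I) (s : Multiset ι) :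
    (∀ j, ((s.map fun i => Polynomial.C (z i) + Polynomial.X * Polynomial.C (w i)).prod).coeff j
      ∈ I ^ j) ∧
    (∀ j < s.card,
      ((s.map fun i => Polynomial.C (z i) + Polynomial.X * Polynomial.C (w i)).prod).coeff j
      ∈ M * I ^ j) ∧
    (∀ j, s.card < j →
      ((s.map fun i => Polynomial.C (z i) + Polynomial.X * Polynomial.C (w i)).prod).coeff j = 0) ∧
    ((s.map fun i => Polynomial.C (z i) + Polynomial.X * Polynomial.C (w i)).prod).coeff s.card
      = (s.map w).prod := by
  induction s using Multiset.induction_on with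
  | empty =>
    refine ⟨fun j => ?_, by simp, fun j hj => ?_, by simp⟩
    · cases j <;> simp [Polynomial.coeff_one]
    · have : j ≠ 0 := by simpa using Nat.ne_of_gt hj
      simp [Polynomial.coeff_one, this]
  | cons a s ih =>
    obtain ⟨h1, h2, h3, h4⟩ := ih
    rw [Multiset.map_cons, Multiset.prod_cons, Multiset.map_cons, Multiset.prod_cons,
      Multiset.card_cons]
    set P := (s.map fun i => Polynomial.C (z i) + Polynomial.X * Polynomial.C (w i)).prod
    have e0 : ((Polynomial.C (z a) + Polynomial.X * Polynomial.C (w a)) * P).coeff 0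
        = z a * P.coeff 0 := by
      rw [add_mul, mul_assoc, Polynomial.coeff_add, Polynomial.coeff_C_mul]
      simp
    have e1 : ∀ j, ((Polynomial.C (z a) + Polynomial.X * Polynomial.C (w a)) * P).coeff (j + 1)
        = z a * P.coeff (j + 1) + w a * P.coeff j := by
      intro j
      rw [add_mul, mul_assoc, Polynomial.coeff_add, Polynomial.coeff_C_mul,
        Polynomial.coeff_X_mul, Polynomial.coeff_C_mul]
    refine ⟨fun j => ?_, fun j hj => ?_, fun j hj => ?_, ?_⟩
    · cases j with
      | zero => simp
      | succ j =>
        rw [e1]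
        refine add_mem (Ideal.mul_mem_left _ _ (h1 _)) ?_
        rw [pow_succ']
        exact Ideal.mul_mem_mul (hw a) (h1 j)
    · cases j with
      | zero => rw [e0]; exact Ideal.mul_mem_mul (hz a) (h1 0)
      | succ j =>
        rw [e1]
        refine add_mem (Ideal.mul_mem_mul (hz a) (h1 _)) ?_
        rw [pow_succ', mul_left_comm]
        exact Ideal.mul_mem_mul (hw a) (h2 j (by omega))
    · cases j with
      | zero => omega
      | succ j => rw [e1, h3 (j + 1) (by omega), h3 j (by omega)]; simp
    · rw [e1, h3 _ (by omega), h4]; simp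

lemma aeval_monomial_multiset {k B : Type*} [Field k] [CommRing B] [Algebra k B] {d : ℕ}
    (u : Fin d → B) (e : Fin d →₀ ℕ) (a : k) :
    aeval u (monomial e a) = a • ((Finsupp.toMultiset e).map u).prod := by
  rw [aeval_monomial, Finsupp.toMultiset_map, Finsupp.prod_toMultiset,
    Finsupp.prod_mapDomain_index (by simp) (by simp [pow_add]), Algebra.smul_def]

lemma card_toMultiset_degree {d : ℕ} (e : Fin d →₀ ℕ) :
    (Finsupp.toMultiset e).card = e.degree := by
  rw [Finsupp.card_toMultiset]; rfl

lemma smul_mem_ideal {k R : Type*} [Field k] [CommRing R] [Algebra k R] (I : Ideal R)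
    (a : k) {x : R} (hx : x ∈ I) : a • x ∈ I := by
  rw [Algebra.smul_def]; exact I.mul_mem_left _ hx

lemma lineRes_coeff_mem {k R : Type*} [Field k] [CommRing R] [Algebra k R] {d : ℕ}
    (I : Ideal R) (z w : Fin d → R) (hw : ∀ i, w i ∈ I) (f : MvPolynomial (Fin d) k) (j : ℕ) :
    (lineRes z w f).coeff j ∈ I ^ j := by
  rw [← support_sum_monomial_coeff f, map_sum, Polynomial.finsetSum_coeff]
  refine sum_mem fun e _ => ?_
  rw [lineRes, aeval_monomial_multiset, Polynomial.coeff_smul]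
  exact smul_mem_ideal _ _ ((prod_coeff I ⊤ z w (by simp) hw _).1 j)

lemma lineRes_coeff_sub_mem {k R : Type*} [Field k] [CommRing R] [Algebra k R] {d : ℕ}
    (I M : Ideal R) (z w : Fin d → R) (hz : ∀ i, z i ∈ M) (hw : ∀ i, w i ∈ I)
    (f : MvPolynomial (Fin d) k) (r : ℕ) (hf : ∀ e ∈ f.support, r ≤ e.degree) :
    (lineRes z w f).coeff r - aeval w (homogeneousComponent r f) ∈ M * I ^ r := by
  have h1 : (lineRes z w f).coeff r - aeval w (homogeneousComponent r f) =
      ∑ e ∈ f.support, ((lineRes z w (monomial e (f.coeff e))).coeff r -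
        aeval w (homogeneousComponent r (monomial e (f.coeff e)))) := by
    conv_lhs => rw [← support_sum_monomial_coeff f]
    simp only [map_sum, Polynomial.finsetSum_coeff, Finset.sum_sub_distrib]
  rw [h1]
  refine sum_mem fun e he => ?_
  have hh := isHomogeneous_monomial (f.coeff e) (rfl : e.degree = e.degree)
  obtain ⟨_, h2, _, h4⟩ := prod_coeff I M z w hz hw (Finsupp.toMultiset e)
  rw [card_toMultiset_degree] at h2 h4
  rw [homogeneousComponent_of_mem hh]
  rcases (hf e he).lt_or_eq with h | h
  · rw [if_neg h.ne, lineRes, aeval_monomial_multiset, Polynomial.coeff_smul, map_zero, sub_zero]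
    exact smul_mem_ideal _ _ (h2 r h)
  · subst h
    rw [if_pos rfl, lineRes, aeval_monomial_multiset, aeval_monomial_multiset,
      Polynomial.coeff_smul, h4, sub_self]
    exact zero_mem _

lemma prod_sub_prod_mem {R ι : Type*} [CommRing R] (I J : Ideal R) (u u' : ι → R)
    (hu : ∀ i, u i ∈ I) (hu' : ∀ i, u' i ∈ I) (hJ : ∀ i, u i - u' i ∈ J) (s : Multiset ι) :
    (s.map u).prod ∈ I ^ s.card ∧
    (s.map u).prod - (s.map u').prod ∈ J * I ^ (s.card - 1) := by
  induction s using Multiset.induction_on with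
  | empty => simp
  | cons a s ih =>
    obtain ⟨h1, h2⟩ := ih
    rw [Multiset.map_cons, Multiset.prod_cons, Multiset.map_cons, Multiset.prod_cons,
      Multiset.card_cons, Nat.add_sub_cancel]
    refine ⟨by rw [pow_succ']; exact Ideal.mul_mem_mul (hu a) h1, ?_⟩
    have : u a * (s.map u).prod - u' a * (s.map u').prod =
      (u a - u' a) * (s.map u).prod + u' a * ((s.map u).prod - (s.map u').prod) := by ring
    rw [this]
    refine add_mem (Ideal.mul_mem_mul (hJ a) h1) ?_
    rcases Nat.eq_zero_or_pos s.card with h | h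
    · rw [Multiset.card_eq_zero] at h
      subst h; simp
    · obtain ⟨t, ht⟩ : ∃ t, s.card = t + 1 := ⟨s.card - 1, by omega⟩
      rw [ht, pow_succ', mul_left_comm]
      rw [ht, Nat.add_sub_cancel] at h2
      exact Ideal.mul_mem_mul (hu' a) h2

lemma aeval_sub_aeval_mem {k R : Type*} [Field k] [CommRing R] [Algebra k R] {d : ℕ}
    (I J : Ideal R) (u u' : Fin d → R)
    (hu : ∀ i, u i ∈ I) (hu' : ∀ i, u' i ∈ I) (hJ : ∀ i, u i - u' i ∈ J)
    (F : MvPolynomial (Fin d) k) (r : ℕ) (hF : F.IsHomogeneous r) :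
    aeval u F - aeval u' F ∈ J * I ^ (r - 1) := by
  rw [← support_sum_monomial_coeff F, map_sum, map_sum, ← Finset.sum_sub_distrib]
  refine sum_mem fun e he => ?_
  rw [aeval_monomial_multiset, aeval_monomial_multiset, ← smul_sub]
  apply smul_mem_ideal
  have h := (prod_sub_prod_mem I J u u' hu hu' hJ (Finsupp.toMultiset e)).2
  have hd : e.degree = r := by
    by_contra hne
    exact (mem_support_iff.mp he) (hF.coeff_eq_zero hne)
  rwa [card_toMultiset_degree, hd] at h

lemma analytic_indep {k R : Type*} [Field k] [Infinite k] [CommRing R] [IsNoetherianRing R]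
    [IsLocalRing R] [Algebra k R] {d : ℕ} (w : Fin d → R)
    (hmin : IsLocalRing.maximalIdeal R ∈ (Ideal.span (Set.range w)).minimalPrimes)
    (hht : (d : ℕ∞) ≤ (IsLocalRing.maximalIdeal R).height)
    (F : MvPolynomial (Fin d) k) (r : ℕ) (hF : F.IsHomogeneous r)
    (hmem : aeval w F ∈ IsLocalRing.maximalIdeal R * Ideal.span (Set.range w) ^ r) : F = 0 := by
  classical
  set M := IsLocalRing.maximalIdeal R
  set I := Ideal.span (Set.range w)
  have hwI : ∀ i, w i ∈ I := fun i => Ideal.subset_span ⟨i, rfl⟩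
  have hIM : I ≤ M := hmin.1.2
  by_contra hne
  obtain ⟨a, ha⟩ : ∃ a : Fin d → k, eval a F ≠ 0 := by
    by_contra hcon
    push Not at hcon
    exact hne (MvPolynomial.funext fun a => by simp [hcon a])
  rcases Nat.eq_zero_or_pos r with hr | hr
  · subst hr
    have hc : F = C (coeff 0 F) := by
      rw [← totalDegree_eq_zero_iff_eq_C]
      exact hF.totalDegree hne
    have hc0 : coeff 0 F ≠ 0 := fun h => hne (by rw [hc, h, C_0])
    rw [hc, aeval_C] at hmem
    have hMle : M * I ^ 0 ≤ M := Ideal.mul_le_left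
    have : algebraMap k R (coeff 0 F) ∈ M := hMle hmem
    exact (IsLocalRing.mem_maximalIdeal _).mp this
      ((isUnit_iff_ne_zero.mpr hc0).map (algebraMap k R))
  obtain ⟨j, hj⟩ : ∃ j, a j ≠ 0 := by
    by_contra hcon
    push Not at hcon
    apply ha
    have ha0 : a = 0 := _root_.funext hcon
    rw [ha0]
    rw [eval_zero, constantCoeff_eq]
    exact hF.coeff_eq_zero (by simpa using hr.ne)
  set u' : Fin d → R := fun i => (a i / a j) • w j
  set J := Ideal.span ((Finset.univ.erase j).image (fun i => w i - u' i) : Set R)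
  have hJ : ∀ i, w i - u' i ∈ J := by
    intro i
    by_cases h : i = j
    · subst h; simp [u', hj]
    · apply Ideal.subset_span
      simp only [Finset.coe_image]
      exact ⟨i, by simp [h], rfl⟩
  have hu'I : ∀ i, u' i ∈ I := fun i => smul_mem_ideal _ _ (hwI j)
  have hJI : J ≤ I := by
    rw [Ideal.span_le]
    intro x hx
    simp only [Finset.coe_image] at hx
    obtain ⟨i, _, rfl⟩ := hx
    exact sub_mem (hwI i) (hu'I i)
  have hsub := aeval_sub_aeval_mem I J w u' hwI hu'I hJ F r hF
  have hFu' : aeval u' F = ((a j)⁻¹ ^ r * eval a F) • (w j) ^ r := by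
    rw [← support_sum_monomial_coeff F, map_sum, map_sum, Finset.mul_sum, Finset.sum_smul]
    refine Finset.sum_congr rfl fun e he => ?_
    have hd : e.degree = r := by
      by_contra hne
      exact (mem_support_iff.mp he) (hF.coeff_eq_zero hne)
    rw [aeval_monomial, eval_monomial, ← hd, Finsupp.degree_eq_sum, Finsupp.prod_fintype _ _ (by simp),
      Finsupp.prod_fintype _ _ (by simp), ← Finset.prod_pow_eq_pow_sum, ← Finset.prod_pow_eq_pow_sum,
      Algebra.smul_def]
    simp only [u', Algebra.smul_def, mul_pow, Finset.prod_mul_distrib, map_mul, map_prod, map_pow,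
      div_eq_mul_inv]
    ring
  have hwj : (w j) ^ r ∈ J * I ^ (r - 1) ⊔ M * I ^ r := by
    set c := (a j)⁻¹ ^ r * eval a F
    have hc : c ≠ 0 := mul_ne_zero (pow_ne_zero _ (inv_ne_zero hj)) ha
    have : (w j) ^ r = c⁻¹ • (aeval u' F) := by rw [hFu', smul_smul, inv_mul_cancel₀ hc, one_smul]
    rw [this]
    apply smul_mem_ideal
    have : aeval u' F = -(aeval w F - aeval u' F) + aeval w F := by ring
    rw [this]
    exact Submodule.add_mem_sup (neg_mem hsub) hmem
  have hIle : I ≤ J ⊔ Ideal.span {w j} := by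
    rw [Ideal.span_le]
    rintro _ ⟨i, rfl⟩
    have : w i = (w i - u' i) + u' i := by ring
    rw [this]
    exact Submodule.add_mem_sup (hJ i) (smul_mem_ideal _ _ (Ideal.mem_span_singleton_self _))
  have hpow : ∀ t : ℕ, I ^ (t + 1) ≤ J * I ^ t ⊔ Ideal.span {w j ^ (t + 1)} := by
    intro t
    induction t with
    | zero => simpa using hIle
    | succ t ih =>
      calc I ^ (t + 1 + 1) = I * I ^ (t + 1) := pow_succ' _ _
        _ ≤ (J ⊔ Ideal.span {w j}) * I ^ (t + 1) := Ideal.mul_mono_left hIle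
        _ = J * I ^ (t + 1) ⊔ Ideal.span {w j} * I ^ (t + 1) := Ideal.sup_mul _ _ _
        _ ≤ J * I ^ (t + 1) ⊔ Ideal.span {w j} * (J * I ^ t ⊔ Ideal.span {w j ^ (t + 1)}) :=
            sup_le_sup_left (Ideal.mul_mono_right ih) _
        _ ≤ _ := by
          rw [Ideal.mul_sup, Ideal.span_singleton_mul_span_singleton, ← pow_succ']
          refine sup_le le_sup_left (sup_le (le_sup_of_le_left ?_) le_sup_right)
          rw [mul_left_comm, pow_succ']
          refine Ideal.mul_mono_right (Ideal.mul_mono_left ?_)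
          rw [Ideal.span_le]; simpa using hwI j
  obtain ⟨t, rfl⟩ : ∃ t, r = t + 1 := ⟨r - 1, by omega⟩
  rw [Nat.add_sub_cancel] at hwj
  have hle : I ^ (t + 1) ≤ J * I ^ t ⊔ M • I ^ (t + 1) := by
    refine (hpow t).trans (sup_le le_sup_left ?_)
    rw [Ideal.span_le]; simpa using hwj
  have hnak : I ^ (t + 1) ≤ J := by
    refine (Submodule.le_of_le_smul_of_le_jacobson_bot (IsNoetherian.noetherian _)
      (IsLocalRing.maximalIdeal_le_jacobson ⊥) hle).trans Ideal.mul_le_left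
  have hminJ : M ∈ J.minimalPrimes := by
    refine ⟨⟨inferInstance, hJI.trans hIM⟩, fun Q hQ hQM => hmin.2 ⟨hQ.1, ?_⟩ hQM⟩
    have := hQ.1
    exact Ideal.IsPrime.le_of_pow_le (hnak.trans hQ.2)
  have hle2 := Ideal.height_le_card_of_mem_minimalPrimes_span_finset hminJ
  have hcard : ((Finset.univ.erase j).image (fun i => w i - u' i)).card < d := by
    refine Finset.card_image_le.trans_lt ?_
    rw [Finset.card_erase_of_mem (Finset.mem_univ _), Finset.card_univ, Fintype.card_fin]
    have := j.pos
    omega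
  have := hht.trans hle2
  rw [Nat.cast_le] at this
  omega

theorem core_local {k R : Type*} [Field k] [CharZero k] [CommRing R] [IsNoetherianRing R]
    [IsLocalRing R] [Algebra k R] {d : ℕ} (y z : Fin d → R)
    (hz : ∀ i, z i ∈ IsLocalRing.maximalIdeal R)
    (hmin : IsLocalRing.maximalIdeal R ∈
      (Ideal.span (Set.range fun i => y i - z i)).minimalPrimes)
    (hht : (d : ℕ∞) ≤ (IsLocalRing.maximalIdeal R).height)
    (f : MvPolynomial (Fin d) k) (m n : ℕ)
    (hfy : ∀ v : List (Fin d), v.length < m → aeval y (iteratedPDeriv v f) = 0)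
    (hfz : ∀ v : List (Fin d), v.length < n → aeval z (iteratedPDeriv v f) = 0)
    (r : ℕ) (hr : r < m + n) (hf : ∀ e ∈ f.support, r ≤ e.degree) :
    homogeneousComponent r f = 0 := by
  set w : Fin d → R := fun i => y i - z i
  set M := IsLocalRing.maximalIdeal R
  set I := Ideal.span (Set.range w)
  have hwI : ∀ i, w i ∈ I := fun i => Ideal.subset_span ⟨i, rfl⟩
  have hIM : I ≤ M := hmin.1.2
  refine analytic_indep w hmin hht _ r (homogeneousComponent_isHomogeneous r f) ?_
  have h1 := X_pow_dvd_lineRes z w n f hfz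
  have h2 := sub_one_pow_dvd_lineRes y z m f hfy
  have hcop : IsCoprime ((Polynomial.X : Polynomial R) ^ n) ((Polynomial.X - 1) ^ m) :=
    IsCoprime.pow ⟨1, -1, by ring⟩
  have h3 := hcop.mul_dvd h1 h2
  have hmon1 : ((Polynomial.X : Polynomial R) ^ n).Monic := Polynomial.monic_X_pow n
  have hmon0 : (Polynomial.X - 1 : Polynomial R).Monic := by
    simpa using Polynomial.monic_X_sub_C (1 : R)
  have hdeg0 : (Polynomial.X - 1 : Polynomial R).natDegree = 1 := by
    simpa using Polynomial.natDegree_X_sub_C (1 : R)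
  have hmon2 : ((Polynomial.X - 1 : Polynomial R) ^ m).Monic := hmon0.pow m
  have h4 := mem_all_coeff I _ _ (m + n) (hmon1.mul hmon2)
    (by rw [hmon1.natDegree_mul hmon2, hmon0.natDegree_pow, hdeg0]; simp; ring) h3
    (lineRes_coeff_mem I z w hwI f) r
  have h5 := lineRes_coeff_sub_mem I M z w hz hwI f r hf
  have h6 : (lineRes z w f).coeff r ∈ M * I ^ r := by
    have : I ^ (m + n) ≤ M * I ^ r := by
      refine (Ideal.pow_le_pow_right (Nat.succ_le_of_lt hr)).trans ?_
      rw [Nat.succ_eq_add_one, pow_succ']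
      exact Ideal.mul_mono_left hIM
    exact this h4
  have := sub_mem h6 h5
  rwa [sub_sub_cancel] at this

lemma height_maximal_mvPolynomial {k : Type*} [Field k] (s : ℕ) :
    ∀ (N : Ideal (MvPolynomial (Fin s) k)), N.IsMaximal → N.height = s := by
  induction s with
  | zero =>
    intro N hN
    have h1 : (N.height : WithBot ℕ∞) ≤ ringKrullDim (MvPolynomial (Fin 0) k) :=
      Ideal.height_le_ringKrullDim_of_ne_top hN.ne_top
    rw [MvPolynomial.ringKrullDim_of_isNoetherianRing, ringKrullDim_eq_zero_of_field] at h1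
    simp only [Nat.card_eq_fintype_card, Fintype.card_fin, Nat.cast_zero, add_zero] at h1
    have h2 : N.height ≤ 0 := by exact_mod_cast h1
    simpa using h2
  | succ s ih =>
    intro N hN
    let e := (finSuccEquiv k s).toRingEquiv
    let P : Ideal (Polynomial (MvPolynomial (Fin s) k)) := N.map e
    have hP : P.IsMaximal := Ideal.map_isMaximal_of_equiv e
    let p := P.under (MvPolynomial (Fin s) k)
    have hp : p.IsMaximal := by
      have := Polynomial.isMaximal_comap_C_of_isJacobsonRing P
      exact this
    have : P.LiesOver p := ⟨rfl⟩
    have h := Polynomial.height_eq_height_add_one p P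
    rw [ih p hp] at h
    rw [← e.height_map N]
    exact h.trans (by simp)

lemma ringKrullDim_le_of_isIntegral' {B D : Type*} [CommRing B] [CommRing D] [Algebra B D]
    [Algebra.IsIntegral B D] : ringKrullDim D ≤ ringKrullDim B := by
  refine Order.krullDim_le_of_strictMono (PrimeSpectrum.comap (algebraMap B D)) ?_
  intro P Q hPQ
  have : P.asIdeal < Q.asIdeal := hPQ
  exact Ideal.IsIntegral.comap_lt_comap this

lemma ringKrullDim_le_height {k D : Type*} [Field k] [CommRing D] [IsDomain D] [Algebra k D]
    [Algebra.FiniteType k D] (M : Ideal D) [hM : M.IsMaximal] :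
    ringKrullDim D ≤ (M.height : WithBot ℕ∞) := by
  obtain ⟨s, g, hinj, hgint⟩ := exists_integral_inj_algHom_of_fg k D
  have hN : IsNoetherianRing D := Algebra.FiniteType.isNoetherianRing k D
  let _ : Algebra (MvPolynomial (Fin s) k) D := g.toRingHom.toAlgebra
  have : Algebra.IsIntegral (MvPolynomial (Fin s) k) D := ⟨hgint⟩
  have : FaithfulSMul (MvPolynomial (Fin s) k) D :=
    (faithfulSMul_iff_algebraMap_injective _ _).mpr hinj
  let N := M.under (MvPolynomial (Fin s) k)
  have hNm : N.IsMaximal := Ideal.isMaximal_comap_of_isIntegral_of_isMaximal M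
  have : M.LiesOver N := ⟨rfl⟩
  have h1 := Ideal.height_eq_height_add_of_liesOver_of_hasGoingDown N M
  have h2 : (s : ℕ∞) ≤ M.height := by
    rw [h1, height_maximal_mvPolynomial s N hNm]; exact le_self_add
  have h3 : ringKrullDim D ≤ ringKrullDim (MvPolynomial (Fin s) k) := ringKrullDim_le_of_isIntegral'
  rw [MvPolynomial.ringKrullDim_of_isNoetherianRing, ringKrullDim_eq_zero_of_field] at h3
  simp only [Nat.card_eq_fintype_card, Fintype.card_fin, zero_add] at h3
  refine h3.trans ?_
  exact_mod_cast h2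

lemma height_le_height_comap {A B : Type*} [CommRing A] [CommRing B] (φ : A →+* B)
    (hφ : Function.Surjective φ) (Q : Ideal B) [hQ : Q.IsPrime] :
    Q.height ≤ (Q.comap φ).height := by
  have h := Order.height_le_height_apply_of_strictMono (PrimeSpectrum.comap φ)
    (RingHom.strictMono_comap_of_surjective hφ) ⟨Q, hQ⟩
  rwa [← PrimeSpectrum.height_eq_orderHeight, ← PrimeSpectrum.height_eq_orderHeight] at h

lemma height_tensor {k D E : Type*} [Field k] [CommRing D] [CommRing E] [Algebra k D] [Algebra k E]
    [Algebra.FiniteType k D] [Algebra.FiniteType k E] (α : D →ₐ[k] k) (β : E →ₐ[k] k) :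
    (RingHom.ker α).height + (RingHom.ker β).height ≤
      (RingHom.ker (Algebra.TensorProduct.lift α β (fun _ _ => Commute.all _ _))).height := by
  have : IsNoetherianRing D := Algebra.FiniteType.isNoetherianRing k D
  have : Algebra.FiniteType k (TensorProduct k D E) := Algebra.FiniteType.trans (S := D) ‹_› inferInstance
  have : IsNoetherianRing (TensorProduct k D E) := Algebra.FiniteType.isNoetherianRing k _
  set γ := Algebra.TensorProduct.lift α β (fun _ _ => Commute.all _ _)
  have hMp : (RingHom.ker γ).IsPrime := RingHom.ker_isPrime _
  have hap : (RingHom.ker α).IsPrime := RingHom.ker_isPrime _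
  have hbp : (RingHom.ker β).IsPrime := RingHom.ker_isPrime _
  have : (RingHom.ker γ).LiesOver (RingHom.ker α) := ⟨by
    ext x
    simp [γ, RingHom.mem_ker, Ideal.mem_comap, Algebra.TensorProduct.algebraMap_apply]⟩
  rw [Ideal.height_eq_height_add_of_liesOver_of_hasGoingDown (RingHom.ker α) (RingHom.ker γ)]
  gcongr
  let ψ : TensorProduct k D E →ₐ[k] E :=
    Algebra.TensorProduct.lift ((Algebra.ofId k E).comp α) (AlgHom.id k E) (fun _ _ => Commute.all _ _)
  let ψ' : (TensorProduct k D E) ⧸ ((RingHom.ker α).map (algebraMap D (TensorProduct k D E))) →+* E :=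
    Ideal.Quotient.lift _ ψ.toRingHom (by
      intro a ha
      have : (RingHom.ker α).map (algebraMap D (TensorProduct k D E)) ≤ RingHom.ker ψ.toRingHom := by
        rw [Ideal.map_le_iff_le_comap]
        intro x hx
        have hx' : α x = 0 := hx
        simp [ψ, RingHom.mem_ker, Ideal.mem_comap, Algebra.TensorProduct.algebraMap_apply, hx']
      exact this ha)
  have hsurj : Function.Surjective ψ' := by
    intro y
    exact ⟨Ideal.Quotient.mk _ (1 ⊗ₜ y), by simp [ψ', ψ]⟩
  refine (height_le_height_comap ψ' hsurj (RingHom.ker β)).trans (le_of_eq ?_)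
  congr 1
  have hcomp : β.comp ψ = γ := by
    apply Algebra.TensorProduct.ext'
    intro a b
    simp [ψ, γ, Algebra.ofId_apply]
  apply le_antisymm
  · intro x hx
    obtain ⟨x, rfl⟩ := Ideal.Quotient.mk_surjective x
    apply Ideal.mem_map_of_mem
    have : β (ψ x) = 0 := hx
    rw [RingHom.mem_ker, ← hcomp]
    exact this
  · rw [Ideal.map_le_iff_le_comap]
    intro x hx
    rw [RingHom.mem_ker, ← hcomp] at hx
    exact hx

lemma X_mem_of_finite {k : Type*} [Field k] [IsAlgClosed k] {d : ℕ}
    (p q Q : Ideal (MvPolynomial (Fin d) k)) [hQ : Q.IsPrime]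
    (hfin : (affineZeros p ∩ affineZeros q).Finite) (hp : p ≤ Q) (hq : q ≤ Q)
    (h0 : ∀ f ∈ Q, eval (0 : Fin d → k) f = 0) (i : Fin d) : X i ∈ Q := by
  classical
  have hfin' : (zeroLocus k Q).Finite := hfin.subset fun a ha =>
    ⟨fun f hf => by simpa [aeval_eq_eval] using ha f (hp hf),
      fun f hf => by simpa [aeval_eq_eval] using ha f (hq hf)⟩
  have hQe : vanishingIdeal k (zeroLocus k Q) = Q := IsPrime.vanishingIdeal_zeroLocus Q
  have h1 : hfin'.toFinset.inf (fun a => vanishingIdeal k {a}) ≤ Q := by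
    intro f hf
    rw [← hQe]
    intro a ha
    have hle : hfin'.toFinset.inf (fun a => vanishingIdeal k {a}) ≤ vanishingIdeal k {a} :=
      Finset.inf_le (f := fun a => vanishingIdeal k {a}) (by simpa using ha)
    exact (mem_vanishingIdeal_singleton_iff a f).mp (hle hf)
  obtain ⟨a, _, ha⟩ := (Ideal.IsPrime.inf_le' hQ).mp h1
  have hX : ∀ j, X j - C (a j) ∈ Q := fun j => ha (by
    rw [mem_vanishingIdeal_singleton_iff]; simp)
  have hai : a i = 0 := by simpa using h0 _ (hX i)
  simpa [hai] using hX i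

lemma iteratedPDeriv_eval_zero {k : Type*} [Field k] {d : ℕ} (v : List (Fin d)) :
    ∀ (f : MvPolynomial (Fin d) k) (N : ℕ), (∀ e : Fin d →₀ ℕ, e.degree < N → coeff e f = 0) →
    v.length < N → eval (0 : Fin d → k) (iteratedPDeriv v f) = 0 := by
  induction v with
  | nil =>
    intro f N hf hN
    rw [eval_zero, constantCoeff_eq]
    exact hf 0 (by simpa using hN)
  | cons i v ih =>
    intro f N hf hN
    refine ih (pderiv i f) (N - 1) (fun e he => ?_) (by simp at hN; omega)
    rw [coeff_pderiv, hf _ (by simp; omega), zero_mul]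

theorem core_at_prime {k A : Type*} [Field k] [CharZero k] [CommRing A] [hAN : IsNoetherianRing A]
    [Algebra k A] {d : ℕ} (M0 : Ideal A) [hM0 : M0.IsPrime] (y0 z0 : Fin d → A)
    (hz : ∀ i, z0 i ∈ M0)
    (hmin0 : M0 ∈ (Ideal.span (Set.range fun i => y0 i - z0 i)).minimalPrimes)
    (hht0 : (d : ℕ∞) ≤ M0.height)
    (f : MvPolynomial (Fin d) k) (m n : ℕ)
    (hfy : ∀ v : List (Fin d), v.length < m → aeval y0 (iteratedPDeriv v f) = 0)
    (hfz : ∀ v : List (Fin d), v.length < n → aeval z0 (iteratedPDeriv v f) = 0)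
    (r : ℕ) (hr : r < m + n) (hf : ∀ e ∈ f.support, r ≤ e.degree) :
    homogeneousComponent r f = 0 := by
  have hRN : IsNoetherianRing (Localization.AtPrime M0) :=
    IsLocalization.isNoetherianRing M0.primeCompl _ hAN
  let l : A →ₐ[k] Localization.AtPrime M0 := IsScalarTower.toAlgHom k A _
  have haev : ∀ (u : Fin d → A) (g : MvPolynomial (Fin d) k),
      aeval (fun i => l (u i)) g = l (aeval u g) := by
    intro u g
    have : aeval (fun i => l (u i)) = l.comp (aeval (R := k) u) := by
      apply MvPolynomial.algHom_ext
      intro i; simp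
    rw [this]; rfl
  have hcom : (IsLocalRing.maximalIdeal (Localization.AtPrime M0)).under A = M0 :=
    Localization.AtPrime.under_maximalIdeal
  refine core_local (R := Localization.AtPrime M0) (fun i => l (y0 i)) (fun i => l (z0 i))
    ?_ ?_ ?_ f m n ?_ ?_ r hr hf
  · intro i
    have : z0 i ∈ (IsLocalRing.maximalIdeal (Localization.AtPrime M0)).under A := by
      rw [hcom]
      exact hz i
    exact this
  · have h1 : (Ideal.span (Set.range fun i => l (y0 i) - l (z0 i))) =
        (Ideal.span (Set.range fun i => y0 i - z0 i)).map
          (algebraMap A (Localization.AtPrime M0)) := by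
      rw [Ideal.map_span, ← Set.range_comp]
      congr 2
      ext i
      simp [l]
    rw [h1, IsLocalization.minimalPrimes_map M0.primeCompl]
    have h2 : (IsLocalRing.maximalIdeal (Localization.AtPrime M0)).under A ∈
        (Ideal.span (Set.range fun i => y0 i - z0 i)).minimalPrimes := by rwa [hcom]
    exact h2
  · rw [← IsLocalization.height_under M0.primeCompl, hcom]
    exact hht0
  · intro v hv
    rw [haev, hfy v hv, map_zero]
  · intro v hv
    rw [haev, hfz v hv, map_zero]

open scoped TensorProduct in
/-- The coordinate ring of the product of two subvarieties. -/
abbrev ProdRing {k : Type*} [Field k] {d : ℕ} (p q : Ideal (MvPolynomial (Fin d) k)) : Type _ :=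
  (MvPolynomial (Fin d) k ⧸ p) ⊗[k] (MvPolynomial (Fin d) k ⧸ q)

lemma key {k : Type*} [Field k] [IsAlgClosed k] [CharZero k] {d : ℕ}
    (p q : Ideal (MvPolynomial (Fin d) k)) (hp : p.IsPrime) (hq : q.IsPrime)
    (hfin : (affineZeros p ∩ affineZeros q).Finite)
    (h0p : (0 : Fin d → k) ∈ affineZeros p) (h0q : (0 : Fin d → k) ∈ affineZeros q)
    (hdim : ringKrullDim (MvPolynomial (Fin d) k ⧸ p) +
      ringKrullDim (MvPolynomial (Fin d) k ⧸ q) = (d : WithBot ℕ∞))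
    (f : MvPolynomial (Fin d) k) (m n : ℕ)
    (hfY : ∀ v : List (Fin d), v.length < m → iteratedPDeriv v f ∈ p)
    (hfZ : ∀ v : List (Fin d), v.length < n → iteratedPDeriv v f ∈ q)
    (r : ℕ) (hr : r < m + n) (hf : ∀ e ∈ f.support, r ≤ e.degree) :
    homogeneousComponent r f = 0 := by
  let α : ((MvPolynomial (Fin d) k) ⧸ p) →ₐ[k] k := Ideal.Quotient.liftₐ p (aeval (0 : Fin d → k))
    (fun a ha => by simpa [aeval_eq_eval] using h0p a ha)
  let β : ((MvPolynomial (Fin d) k) ⧸ q) →ₐ[k] k := Ideal.Quotient.liftₐ q (aeval (0 : Fin d → k))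
    (fun a ha => by simpa [aeval_eq_eval] using h0q a ha)
  let γ : (ProdRing p q) →ₐ[k] k := Algebra.TensorProduct.lift α β (fun _ _ => Commute.all _ _)
  have hAft : Algebra.FiniteType k (ProdRing p q) :=
    Algebra.FiniteType.trans (S := (MvPolynomial (Fin d) k) ⧸ p) inferInstance inferInstance
  have hAN : IsNoetherianRing (ProdRing p q) := Algebra.FiniteType.isNoetherianRing k (ProdRing p q)
  let M0 : @Ideal (ProdRing p q) CommRing.toCommSemiring.toSemiring := RingHom.ker γ
  have hM0 : M0.IsPrime := RingHom.ker_isPrime _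
  have hαs : Function.Surjective α := fun c => ⟨algebraMap k _ c, by simp⟩
  have hβs : Function.Surjective β := fun c => ⟨algebraMap k _ c, by simp⟩
  have hαm : (RingHom.ker α).IsMaximal := RingHom.ker_isMaximal_of_surjective _ hαs
  have hβm : (RingHom.ker β).IsMaximal := RingHom.ker_isMaximal_of_surjective _ hβs
  have hht0 : (d : ℕ∞) ≤ M0.height := by
    refine le_trans ?_ (height_tensor α β)
    have h1 := ringKrullDim_le_height (k := k) (RingHom.ker α)
    have h2 := ringKrullDim_le_height (k := k) (RingHom.ker β)
    have h3 := add_le_add h1 h2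
    rw [hdim] at h3
    exact_mod_cast h3
  let iY : (MvPolynomial (Fin d) k) →ₐ[k] (ProdRing p q) := Algebra.TensorProduct.includeLeft.comp (Ideal.Quotient.mkₐ k p)
  let iZ : (MvPolynomial (Fin d) k) →ₐ[k] (ProdRing p q) := Algebra.TensorProduct.includeRight.comp (Ideal.Quotient.mkₐ k q)
  have hiY : ∀ g ∈ p, iY g = 0 := fun g hg => by
    have : Ideal.Quotient.mk p g = 0 := Ideal.Quotient.eq_zero_iff_mem.mpr hg
    simp [iY, this]
  have hiZ : ∀ g ∈ q, iZ g = 0 := fun g hg => by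
    have : Ideal.Quotient.mk q g = 0 := Ideal.Quotient.eq_zero_iff_mem.mpr hg
    simp [iZ, this]
  have hγY : ∀ g, γ (iY g) = eval 0 g := fun g => by
    simp [γ, iY, α, aeval_eq_eval]
  have hγZ : ∀ g, γ (iZ g) = eval 0 g := fun g => by
    simp [γ, iZ, β, aeval_eq_eval]
  let y0 : Fin d → (ProdRing p q) := fun i => iY (X i)
  let z0 : Fin d → (ProdRing p q) := fun i => iZ (X i)
  have hmin0 : M0 ∈ (Ideal.span (Set.range fun i => y0 i - z0 i)).minimalPrimes := by
    refine ⟨⟨hM0, ?_⟩, ?_⟩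
    · rw [Ideal.span_le]
      rintro _ ⟨i, rfl⟩
      change γ (iY (X i) - iZ (X i)) = 0
      rw [map_sub, hγY, hγZ, sub_self]
    · rintro Q ⟨hQ, hwQ⟩ hQM
      have hyz : ∀ g, Ideal.Quotient.mk Q (iY g) = Ideal.Quotient.mk Q (iZ g) := by
        have : (Ideal.Quotient.mkₐ k Q).comp iY = (Ideal.Quotient.mkₐ k Q).comp iZ := by
          apply MvPolynomial.algHom_ext
          intro i
          exact (Ideal.Quotient.mk_eq_mk_iff_sub_mem _ _).mpr (hwQ (Ideal.subset_span ⟨i, rfl⟩))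
        exact fun g => congrArg (fun h => h g) this
      have hX : ∀ i, X i ∈ Q.comap iY := by
        intro i
        refine X_mem_of_finite p q (Q.comap iY) hfin ?_ ?_ ?_ i
        · intro g hg
          rw [Ideal.mem_comap, hiY g hg]; exact Q.zero_mem
        · intro g hg
          rw [Ideal.mem_comap, ← Ideal.Quotient.eq_zero_iff_mem, hyz, hiZ g hg, map_zero]
        · intro g hg
          rw [← hγY]
          exact hQM hg
      have hXY : ∀ i, Ideal.Quotient.mk Q (iY (X i)) = 0 := fun i =>
        Ideal.Quotient.eq_zero_iff_mem.mpr (hX i)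
      have hXZ : ∀ i, Ideal.Quotient.mk Q (iZ (X i)) = 0 := fun i => by rw [← hyz, hXY]
      have hfac : Ideal.Quotient.mkₐ k Q = (Algebra.ofId k ((ProdRing p q) ⧸ Q)).comp γ := by
        apply Algebra.TensorProduct.ext
        · apply Ideal.Quotient.algHom_ext
          apply MvPolynomial.algHom_ext
          intro i
          change Ideal.Quotient.mk Q (iY (X i)) = algebraMap k _ (γ (iY (X i)))
          rw [hXY, hγY]; simp
        · apply Ideal.Quotient.algHom_ext
          apply MvPolynomial.algHom_ext
          intro i
          change Ideal.Quotient.mk Q (iZ (X i)) = algebraMap k _ (γ (iZ (X i)))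
          rw [hXZ, hγZ]; simp
      intro x hx
      have hx' : γ x = 0 := hx
      have : Ideal.Quotient.mkₐ k Q x = 0 := by rw [hfac]; simp [hx']
      exact Ideal.Quotient.eq_zero_iff_mem.mp this
  have haev : ∀ (j : (MvPolynomial (Fin d) k) →ₐ[k] (ProdRing p q)) (g : MvPolynomial (Fin d) k),
      aeval (fun i => j (X i)) g = j g := by
    intro j g
    have : aeval (fun i => j (X i)) = j := by
      apply MvPolynomial.algHom_ext
      intro i; simp
    rw [this]
  refine core_at_prime M0 y0 z0 ?_ hmin0 hht0 f m n ?_ ?_ r hr hf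
  · intro i
    change γ (iZ (X i)) = 0
    rw [hγZ]; simp
  · intro v hv
    rw [haev iY, hiY _ (hfY v hv)]
  · intro v hv
    rw [haev iZ, hiZ _ (hfZ v hv)]

lemma mem_of_vanish {k : Type*} [Field k] [IsAlgClosed k] {d : ℕ}
    (p : Ideal (MvPolynomial (Fin d) k)) (hp : p.IsPrime) (g : MvPolynomial (Fin d) k)
    (h : ∀ a ∈ affineZeros p, eval a g = 0) : g ∈ p := by
  have hQe : vanishingIdeal k (zeroLocus k p) = p := IsPrime.vanishingIdeal_zeroLocus p
  rw [← hQe]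
  intro a ha
  rw [aeval_eq_eval]
  exact h a fun f hf => by simpa [aeval_eq_eval] using ha f hf

end Aux

/-- Let `k` be an algebraically closed field of characteristic `0`, and let
`Y = V(p)` and `Z = V(q)` be closed subvarieties of affine `d`-space over `k` that intersect
in finitely many points, including the origin, with `dim Y + dim Z = d`.  If a nonzero
polynomial `f` vanishes to order `m` along `Y` and to order `n` along `Z`, then `f`
vanishes to order at least `m + n` at the origin, i.e. all partial derivatives of `f` of
order `< m + n` vanish at the origin. -/
theorem statement4 (k : Type*) [Field k] [IsAlgClosed k] [CharZero k] (d : ℕ)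
    (p q : Ideal (MvPolynomial (Fin d) k)) (hp : p.IsPrime) (hq : q.IsPrime)
    (hfin : (affineZeros p ∩ affineZeros q).Finite)
    (h0p : (0 : Fin d → k) ∈ affineZeros p) (h0q : (0 : Fin d → k) ∈ affineZeros q)
    (hdim : ringKrullDim (MvPolynomial (Fin d) k ⧸ p) +
      ringKrullDim (MvPolynomial (Fin d) k ⧸ q) = (d : WithBot ℕ∞))
    (f : MvPolynomial (Fin d) k) (hf : f ≠ 0) (m n : ℕ)
    (hfY : VanishesToOrderAlong f (affineZeros p) m)
    (hfZ : VanishesToOrderAlong f (affineZeros q) n) :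
    ∀ v : List (Fin d), v.length < m + n →
      MvPolynomial.eval (0 : Fin d → k) (iteratedPDeriv v f) = 0 := by
  classical
  intro v hv
  by_contra hne
  have hex : ∃ r, r < m + n ∧ ∃ e : Fin d →₀ ℕ, e.degree = r ∧ MvPolynomial.coeff e f ≠ 0 := by
    by_contra hcon
    push Not at hcon
    exact hne (Aux.iteratedPDeriv_eval_zero v f (m + n) (fun e he => hcon _ he e rfl) hv)
  obtain ⟨hr, e, he, hce⟩ := Nat.find_spec hex
  have hz := Aux.key p q hp hq hfin h0p h0q hdim f m n
    (fun v hv => Aux.mem_of_vanish p hp _ (hfY.1 v hv))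
    (fun v hv => Aux.mem_of_vanish q hq _ (hfZ.1 v hv)) (Nat.find hex) hr (by
      intro e' he'
      by_contra hlt
      push Not at hlt
      exact Nat.find_min hex hlt ⟨hlt.trans hr, e', rfl, MvPolynomial.mem_support_iff.mp he'⟩)
  apply hce
  have := congrArg (MvPolynomial.coeff e) hz
  rwa [MvPolynomial.coeff_homogeneousComponent, if_pos he, MvPolynomial.coeff_zero] at this
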